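/- Let γ > 0 and let (i,j) and (i',j') be two distinct plus-anchors. Then for every point p in the plus-shape P_γ(i,j) and every point q in the plus-shape P_γ(i',j'), the Euclidean distance satisfies d₂(p,q) ≥ √2 · γ. -/

import Mathlib

open Set

/-- The Euclidean (`L₂`) distance on `ℝ²`. -/
noncomputable def d2 (p q : ℝ × ℝ) : ℝ := Real.sqrt ((p.1 - q.1) ^ 2 + (p.2 - q.2) ^ 2)

/-- The plus-shape with anchor grid point `(i,j)` in the grid with spacing `γ`. -/
def plusShape (γ : ℝ) (i j : ℤ) : Set (ℝ × ℝ) :=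
  ({(i : ℝ) * γ} ×ˢ Set.Icc (((j : ℝ) - 1) * γ) (((j : ℝ) + 1) * γ)) ∪
  (Set.Icc (((i : ℝ) - 1) * γ) (((i : ℝ) + 1) * γ) ×ˢ {(j : ℝ) * γ})

/-- `(i,j)` is a plus-anchor if `i` is even and `i ≡ j (mod 4)`. -/
def plusAnchor (i j : ℤ) : Prop := Even i ∧ i ≡ j [ZMOD 4]

/-!
Every plus-shape lies in the taxicab ball of radius `γ` around its anchor point. For two distinct
anchors with difference `(u, v)`, both `u + v` and `u - v` are multiples of `4`, not both zero,
so the anchor points are at taxicab distance at least `4 * γ`. Hence points of the two plus-shapes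
are at taxicab distance at least `2 * γ`, and the taxicab distance is at most `√2` times the
Euclidean one.
-/

/-- The taxicab (`L₁`) distance on `ℝ²`, in which plus-shapes are contained in balls. It is the
metric of `WithLp 1`, because `ℝ × ℝ` itself carries the sup metric. -/
noncomputable abbrev d1 (p q : ℝ × ℝ) : ℝ := dist (WithLp.toLp 1 p) (WithLp.toLp 1 q)

theorem d1_eq_abs_add_abs (p q : ℝ × ℝ) : d1 p q = |p.1 - q.1| + |p.2 - q.2| :=
  WithLp.prod_dist_eq_of_L1 _ _

theorem d1_le_sqrt_two_mul_d2 (p q : ℝ × ℝ) : d1 p q ≤ √2 * d2 p q := by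
  rw [d1_eq_abs_add_abs, d2, ← Real.sqrt_mul zero_le_two]
  apply Real.le_sqrt_of_sq_le
  simpa only [sq_abs] using add_sq_le (a := |p.1 - q.1|) (b := |p.2 - q.2|)

/-- The point of `ℝ²` at position `(i, j)` of the grid with spacing `γ`, the centre of
`plusShape γ i j`. -/
def gridPoint (γ : ℝ) (i j : ℤ) : ℝ × ℝ := (i * γ, j * γ)

theorem d1_gridPoint_gridPoint (γ : ℝ) (i j i' j' : ℤ) :
    d1 (gridPoint γ i j) (gridPoint γ i' j') = ((|i - i'| + |j - j'| : ℤ) : ℝ) * |γ| := by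
  simp only [d1_eq_abs_add_abs, gridPoint, ← sub_mul, abs_mul, ← add_mul]
  push_cast
  rfl

theorem d1_gridPoint_le_of_mem_plusShape {γ : ℝ} {i j : ℤ} {p : ℝ × ℝ}
    (hp : p ∈ plusShape γ i j) : d1 p (gridPoint γ i j) ≤ γ := by
  rw [d1_eq_abs_add_abs, gridPoint]
  rcases hp with ⟨hx, hy⟩ | ⟨hx, hy⟩
  · rw [mem_singleton_iff.mp hx, sub_self, abs_zero, zero_add, abs_sub_le_iff]
    constructor <;> linarith [hy.1, hy.2]
  · rw [mem_singleton_iff.mp hy, sub_self, abs_zero, add_zero, abs_sub_le_iff]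
    constructor <;> linarith [hx.1, hx.2]

theorem le_abs_add_abs_of_dvd_add_of_dvd_sub {n u v : ℤ} (hadd : n ∣ u + v) (hsub : n ∣ u - v)
    (hne : ¬(u = 0 ∧ v = 0)) : n ≤ |u| + |v| := by
  have hne' : u + v ≠ 0 ∨ u - v ≠ 0 := by omega
  rcases hne' with hadd_ne | hsub_ne
  · exact (Int.le_of_dvd (abs_pos.mpr hadd_ne) ((dvd_abs _ _).mpr hadd)).trans (abs_add_le u v)
  · exact (Int.le_of_dvd (abs_pos.mpr hsub_ne) ((dvd_abs _ _).mpr hsub)).trans (abs_sub u v)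

namespace plusAnchor

variable {i j i' j' : ℤ}

theorem four_dvd_sub (h : plusAnchor i j) : 4 ∣ i - j :=
  h.2.symm.dvd

theorem four_dvd_add (h : plusAnchor i j) : 4 ∣ i + j := by
  have four_dvd_two_mul : 4 ∣ 2 * i := mul_dvd_mul_left 2 h.1.two_dvd
  have add_eq : i + j = 2 * i - (i - j) := by ring
  exact add_eq ▸ dvd_sub four_dvd_two_mul h.four_dvd_sub

theorem four_le_abs_sub_add_abs_sub (h : plusAnchor i j) (h' : plusAnchor i' j')
    (hne : (i, j) ≠ (i', j')) : 4 ≤ |i - i'| + |j - j'| := by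
  apply le_abs_add_abs_of_dvd_add_of_dvd_sub
  · rw [← add_sub_add_comm]
    exact dvd_sub h.four_dvd_add h'.four_dvd_add
  · rw [sub_sub_sub_comm]
    exact dvd_sub h.four_dvd_sub h'.four_dvd_sub
  · simpa only [sub_eq_zero, ne_eq, Prod.mk.injEq] using hne

theorem four_mul_abs_le_d1_gridPoint (h : plusAnchor i j) (h' : plusAnchor i' j')
    (hne : (i, j) ≠ (i', j')) (γ : ℝ) :
    4 * |γ| ≤ d1 (gridPoint γ i j) (gridPoint γ i' j') := by
  rw [d1_gridPoint_gridPoint]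
  gcongr
  exact_mod_cast h.four_le_abs_sub_add_abs_sub h' hne

end plusAnchor

theorem stmt5 (γ : ℝ) (hγ : 0 < γ) (i j i' j' : ℤ)
    (h : plusAnchor i j) (h' : plusAnchor i' j') (hne : (i, j) ≠ (i', j'))
    (p q : ℝ × ℝ) (hp : p ∈ plusShape γ i j) (hq : q ∈ plusShape γ i' j') :
    Real.sqrt 2 * γ ≤ d2 p q := by
  have anchors_far : 4 * γ ≤ d1 (gridPoint γ i j) (gridPoint γ i' j') := by
    simpa only [abs_of_pos hγ] using h.four_mul_abs_le_d1_gridPoint h' hne γ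
  have p_near : d1 (gridPoint γ i j) p ≤ γ :=
    (dist_comm _ _).trans_le (d1_gridPoint_le_of_mem_plusShape hp)
  have q_near : d1 q (gridPoint γ i' j') ≤ γ := d1_gridPoint_le_of_mem_plusShape hq
  have triangle : d1 (gridPoint γ i j) (gridPoint γ i' j') ≤
      d1 (gridPoint γ i j) p + d1 p q + d1 q (gridPoint γ i' j') := dist_triangle4 _ _ _ _
  have two_mul_le_d1 : 2 * γ ≤ d1 p q := by linarith
  have sqrt_two_pos : 0 < √(2 : ℝ) := Real.sqrt_pos.mpr two_pos
  refine le_of_mul_le_mul_left ?_ sqrt_two_pos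
  calc √2 * (√2 * γ) = 2 * γ := by rw [← mul_assoc, Real.mul_self_sqrt zero_le_two]
    _ ≤ d1 p q := two_mul_le_d1
    _ ≤ √2 * d2 p q := d1_le_sqrt_two_mul_d2 p q
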